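/- arXiv:2503.11463 — 3 statements merged into one kernel-verified Lean document; each statement's English description precedes it below -/
import Mathlib

section
/- Let n ≥ 1 and let σ be a permutation of [n]. Define the cumulative ascending runs function P*(s) = 1 + |{s' ∈ [s−1] : σ(s'+1) < σ(s')}| for s ∈ [n]. Then P* sorts σ on queues, P*(1) = 1, P*(n) = 1 + desc(σ), and P* is minimal: every P that sorts σ on queues with P(1) = 1 satisfies P(n) ≥ P*(n). -/
/-- `P` sorts `σ` on queues: for all `s, t ∈ [n]`,
`s < t` iff `(P s, σ s)` is lexicographically less than `(P t, σ t)`. -/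
def SortsOnQueues (n : ℕ) (σ P : ℕ → ℕ) : Prop :=
  ∀ s ∈ Finset.Icc 1 n, ∀ t ∈ Finset.Icc 1 n,
    (s < t ↔ P s < P t ∨ (P s = P t ∧ σ s < σ t))

/-- The number of descents of `σ`, `|{s ∈ [n−1] : σ(s+1) < σ(s)}|`. -/
def descents (n : ℕ) (σ : ℕ → ℕ) : ℕ :=
  ((Finset.Icc 1 (n - 1)).filter (fun s => σ (s + 1) < σ s)).card

/-- The cumulative ascending runs function
`P*(s) = 1 + |{s' ∈ [s−1] : σ(s'+1) < σ(s')}|`. -/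
def cumAscRuns (σ : ℕ → ℕ) (s : ℕ) : ℕ :=
  1 + ((Finset.Icc 1 (s - 1)).filter (fun s' => σ (s' + 1) < σ s')).card

/-!
`P` sorts `σ` exactly when `s ↦ (P s, σ s)` is lexicographically strictly increasing on `[n]`, and
this can be tested on consecutive cards: when `σ s ≠ σ (s + 1)`, it says that `P` weakly increases
from `s` to `s + 1`, and strictly if `s` is a descent. The function `P*` starts at `1` and makes the
smallest step allowed each time, so it sorts `σ` and lies below every other sorting function.
-/

lemma sortsOnQueues_iff_strictMonoOn {n : ℕ} {σ P : ℕ → ℕ} :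
    SortsOnQueues n σ P ↔ StrictMonoOn (fun s => toLex (P s, σ s)) (Set.Icc 1 n) := by
  simp only [SortsOnQueues, Finset.mem_Icc, ← Set.mem_Icc]
  constructor
  · exact fun hP s hs t ht hst => Prod.Lex.toLex_lt_toLex.2 ((hP s hs t ht).1 hst)
  · exact fun hmono s hs t ht => (hmono.lt_iff_lt hs ht).symm.trans Prod.Lex.toLex_lt_toLex

lemma sortsOnQueues_iff_forall_succ {n : ℕ} {σ P : ℕ → ℕ} :
    SortsOnQueues n σ P ↔
      ∀ s ∈ Set.Ico 1 n, P s < P (s + 1) ∨ (P s = P (s + 1) ∧ σ s < σ (s + 1)) := by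
  constructor
  · rintro hP s ⟨hs, hsn⟩
    exact (hP s (Finset.mem_Icc.2 ⟨hs, hsn.le⟩) (s + 1)
      (Finset.mem_Icc.2 ⟨by lia, hsn⟩)).1 s.lt_succ_self
  · intro hstep
    refine sortsOnQueues_iff_strictMonoOn.2 (strictMonoOn_of_lt_add_one Set.ordConnected_Icc ?_)
    exact fun s _ hs hs' => Prod.Lex.toLex_lt_toLex.2 (hstep s ⟨hs.1, hs'.2⟩)

lemma cumAscRuns_one (σ : ℕ → ℕ) : cumAscRuns σ 1 = 1 := by
  simp [cumAscRuns]

lemma cumAscRuns_eq_one_add_descents (σ : ℕ → ℕ) (s : ℕ) :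
    cumAscRuns σ s = 1 + descents s σ :=
  rfl

lemma cumAscRuns_succ (σ : ℕ → ℕ) {s : ℕ} (hs : 1 ≤ s) :
    cumAscRuns σ (s + 1) = cumAscRuns σ s + if σ (s + 1) < σ s then 1 else 0 := by
  obtain ⟨k, rfl⟩ := Nat.exists_eq_add_of_le' hs
  simp only [cumAscRuns, Finset.card_filter, Nat.add_sub_cancel]
  rw [Finset.sum_Icc_succ_top (by lia), ← add_assoc]

lemma sortsOnQueues_cumAscRuns {n : ℕ} {σ : ℕ → ℕ}
    (hσ : ∀ s ∈ Set.Ico 1 n, σ s ≠ σ (s + 1)) : SortsOnQueues n σ (cumAscRuns σ) := by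
  refine sortsOnQueues_iff_forall_succ.2 fun s hs => ?_
  rw [cumAscRuns_succ σ hs.1]
  rcases (hσ s hs).lt_or_gt with hascent | hdescent
  · exact .inr ⟨by simp [hascent.not_gt], hascent⟩
  · exact .inl (by simp [hdescent])

lemma SortsOnQueues.cumAscRuns_le {n : ℕ} {σ P : ℕ → ℕ} (hP : SortsOnQueues n σ P)
    (hP₁ : 1 ≤ P 1) {s : ℕ} (hs : s ∈ Set.Icc 1 n) : cumAscRuns σ s ≤ P s := by
  obtain ⟨hs, hsn⟩ := hs
  induction s, hs using Nat.le_induction with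
  | base => rwa [cumAscRuns_one]
  | succ s hs ih =>
    have hstep : P s + (if σ (s + 1) < σ s then 1 else 0) ≤ P (s + 1) := by
      have hlex := sortsOnQueues_iff_forall_succ.1 hP s ⟨hs, hsn⟩
      split_ifs <;> lia
    calc cumAscRuns σ (s + 1)
        = cumAscRuns σ s + if σ (s + 1) < σ s then 1 else 0 := cumAscRuns_succ σ hs
      _ ≤ P s + if σ (s + 1) < σ s then 1 else 0 := by gcongr; exact ih (by lia)
      _ ≤ P (s + 1) := hstep

theorem stmt_2_general (n : ℕ) (σ : ℕ → ℕ) (hσ : ∀ s ∈ Set.Ico 1 n, σ s ≠ σ (s + 1)) :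
    SortsOnQueues n σ (cumAscRuns σ) ∧
    cumAscRuns σ 1 = 1 ∧
    cumAscRuns σ n = 1 + descents n σ ∧
    ∀ P : ℕ → ℕ, SortsOnQueues n σ P → 1 ≤ P 1 → ∀ s ∈ Set.Icc 1 n, cumAscRuns σ s ≤ P s :=
  ⟨sortsOnQueues_cumAscRuns hσ, cumAscRuns_one σ, cumAscRuns_eq_one_add_descents σ n,
    fun _ hP hP₁ _ hs => hP.cumAscRuns_le hP₁ hs⟩

theorem stmt_2 (n : ℕ) (hn : 1 ≤ n) (σ : ℕ → ℕ)
    (hσ : Set.BijOn σ (Set.Icc 1 n) (Set.Icc 1 n)) :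
    SortsOnQueues n σ (cumAscRuns σ) ∧
    cumAscRuns σ 1 = 1 ∧
    cumAscRuns σ n = 1 + descents n σ ∧
    ∀ P : ℕ → ℕ, SortsOnQueues n σ P → P 1 = 1 → cumAscRuns σ n ≤ P n := by
  obtain ⟨hsorts, hone, hlast, hmin⟩ := stmt_2_general n σ fun s hs =>
    hσ.injOn.ne ⟨hs.1, hs.2.le⟩ ⟨by lia, hs.2⟩ s.lt_succ_self.ne
  exact ⟨hsorts, hone, hlast, fun P hP hP₁ => hmin P hP hP₁.ge n ⟨hn, le_rfl⟩⟩
end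

section
/- Let n ≥ 1, let σ be a permutation of [n], and let P : [n] → ℕ be a pile assignment. Then P sorts σ on stacks if and only if for every s ∈ [n−1]: P(s+1) ≥ P(s) + 1 whenever σ(s+1) > σ(s), and P(s+1) ≥ P(s) whenever σ(s+1) < σ(s). -/
/-- `P` sorts `σ` on stacks: for all `s, t ∈ [n]`,
`s < t` iff `P s < P t`, or `P s = P t` and `σ s > σ t`. -/
def SortsOnStacks (n : ℕ) (σ P : ℕ → ℕ) : Prop :=
  ∀ s ∈ Finset.Icc 1 n, ∀ t ∈ Finset.Icc 1 n,
    (s < t ↔ P s < P t ∨ (P s = P t ∧ σ t < σ s))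

/-!
Attach to each card the pair (pile, position), compared lexicographically with positions reversed.
Sorting means that this key preserves and reflects `<`. Labels are totally ordered, so that is
strict monotonicity, which can be tested on consecutive labels; there the key increases exactly when
the two stated inequalities hold, because consecutive cards have different positions.
-/

open Order

lemma strictMonoOn_iff_forall_lt {ι γ : Type*} [LinearOrder ι] [Preorder γ] {f : ι → γ}
    {S : Set ι} : StrictMonoOn f S ↔ ∀ s ∈ S, ∀ t ∈ S, s < t ↔ f s < f t :=
  ⟨fun hf _ hs _ ht => (hf.lt_iff_lt hs ht).symm, fun h _ hs _ ht => (h _ hs _ ht).1⟩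

lemma strictMonoOn_iff_forall_lt_succ {ι γ : Type*} [PartialOrder ι] [SuccOrder ι]
    [IsSuccArchimedean ι] [Preorder γ] {f : ι → γ} {S : Set ι} (hS : S.OrdConnected) :
    StrictMonoOn f S ↔ ∀ s, ¬IsMax s → s ∈ S → succ s ∈ S → f s < f (succ s) :=
  ⟨fun hf _ hmax hs hs' => hf hs hs' (lt_succ_of_not_isMax hmax), strictMonoOn_of_lt_succ hS⟩

lemma mem_Icc_one_sub_one_iff {n s : ℕ} :
    s ∈ Finset.Icc 1 (n - 1) ↔ s ∈ Finset.Icc 1 n ∧ s + 1 ∈ Finset.Icc 1 n := by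
  grind

/-- The place of a card in the deck obtained by stacking the piles: the pile comes first and, within
a pile, the position in the original deck, in the dual order because a stack is emptied from the
top. -/
def stackKey {ι α β : Type*} (σ : ι → α) (P : ι → β) (s : ι) : β ×ₗ αᵒᵈ :=
  toLex (P s, OrderDual.toDual (σ s))

namespace stackKey

variable {ι α β : Type*} {σ : ι → α} {P : ι → β} {s t : ι}

lemma lt_iff [LT α] [LT β] :
    stackKey σ P s < stackKey σ P t ↔ P s < P t ∨ P s = P t ∧ σ t < σ s :=
  Prod.Lex.toLex_lt_toLex

lemma lt_iff_of_ne [LinearOrder α] [PartialOrder β] (hne : σ s ≠ σ t) :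
    stackKey σ P s < stackKey σ P t ↔
      (σ s < σ t → P s < P t) ∧ (σ t < σ s → P s ≤ P t) := by
  rw [lt_iff]
  rcases hne.lt_or_gt with hlt | hgt
  · simp [hlt, hlt.not_gt]
  · simp [hgt, hgt.not_gt, le_iff_lt_or_eq]

end stackKey

theorem stmt_4_general {ι α β : Type*} [LinearOrder ι] [SuccOrder ι] [IsSuccArchimedean ι]
    [LinearOrder α] [PartialOrder β] {S : Set ι} (hS : S.OrdConnected) {σ : ι → α} {P : ι → β}
    (hσ : ∀ s, ¬IsMax s → s ∈ S → succ s ∈ S → σ s ≠ σ (succ s)) :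
    (∀ s ∈ S, ∀ t ∈ S, s < t ↔ P s < P t ∨ (P s = P t ∧ σ t < σ s)) ↔
      ∀ s, ¬IsMax s → s ∈ S → succ s ∈ S →
        (σ s < σ (succ s) → P s < P (succ s)) ∧
        (σ (succ s) < σ s → P s ≤ P (succ s)) := by
  simp_rw [← stackKey.lt_iff]
  rw [← strictMonoOn_iff_forall_lt, strictMonoOn_iff_forall_lt_succ hS]
  exact forall₄_congr fun s hmax hs hs' => stackKey.lt_iff_of_ne (hσ s hmax hs hs')

theorem stmt_4 (n : ℕ) (hn : 1 ≤ n) (σ : ℕ → ℕ)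
    (hσ : Set.BijOn σ (Set.Icc 1 n) (Set.Icc 1 n)) (P : ℕ → ℕ) :
    SortsOnStacks n σ P ↔
      ∀ s ∈ Finset.Icc 1 (n - 1),
        (σ s < σ (s + 1) → P s + 1 ≤ P (s + 1)) ∧
        (σ (s + 1) < σ s → P s ≤ P (s + 1)) := by
  simpa only [SortsOnStacks, mem_Icc_one_sub_one_iff, ← Finset.coe_Icc, Finset.mem_coe,
      succ_eq_add_one, Nat.add_one_le_iff, not_isMax, not_false_eq_true, true_imp_iff, and_imp]
    using stmt_4_general (P := P) Set.ordConnected_Icc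
      fun _ hmax hs hs' => hσ.injOn.ne hs hs' (lt_succ_of_not_isMax hmax).ne
end

section
/- Let n ≥ 1 and T ≥ 1, let m_1, …, m_T ≥ 1, and let σ be a permutation of [n]. There exist pile assignments P_t : [n] → {0, 1, …, m_t − 1} and permutations σ_0 = σ, σ_1, …, σ_T of [n] with QShuffle(P_t, σ_{t−1}) = σ_t for each t ∈ [T] and σ_T equal to the identity permutation, if and only if ascruns(σ) ≤ ∏_{t=1}^{T} m_t. -/
/-- `QShuffle(P, σ) = σ'`: a single round of pile shuffle on queues with
assignments `P` transforms `σ` into `σ'`: for all `s, t ∈ [n]`,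
`σ' s < σ' t` iff `(P s, σ s)` is lexicographically less than `(P t, σ t)`. -/
def QShuffle (n : ℕ) (P σ σ' : ℕ → ℕ) : Prop :=
  ∀ s ∈ Finset.Icc 1 n, ∀ t ∈ Finset.Icc 1 n,
    (σ' s < σ' t ↔ P s < P t ∨ (P s = P t ∧ σ s < σ t))

/-- The number of ascending runs of `σ`, `1 + desc(σ)`. -/
def ascRuns (n : ℕ) (σ : ℕ → ℕ) : ℕ := 1 + descents n σ

/-!
Successive rounds `P 1, …, P T` act like the single round `P 1 + m 1 * P 2 + m 1 * m 2 * P 3 + ⋯`,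
a mixed-radix number below `m 1 * ⋯ * m T`: the last round decides, and earlier rounds break ties.
Conversely, the mixed-radix digits of a single pile assignment split it into rounds. So the question
is how many piles a single round needs to sort `σ`. It sorts `σ` iff the pairs (pile number of `s`,
`σ s`) increase with `s`, i.e. iff the pile numbers weakly increase, strictly at every descent of
`σ`. The least such assignment puts `s` on the pile numbered by the descents before `s`.
-/

section Rank

variable {ι α : Type*} [LinearOrder α]

/-- The rank (counted from `1`) of `s` among the elements of `A` when these are sorted by the
key `f`; it turns an arbitrary linear order of the cards into positions in a deck. -/
def rankBy (A : Finset ι) (f : ι → α) (s : ι) : ℕ := (A.filter fun u => f u ≤ f s).card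

lemma rankBy_lt_rankBy_iff {A : Finset ι} {f : ι → α} {s t : ι} (ht : t ∈ A) :
    rankBy A f s < rankBy A f t ↔ f s < f t := by
  constructor
  · contrapose!
    exact fun hts => Finset.card_le_card <|
      Finset.monotone_filter_right A fun _ _ hu => hu.trans hts
  · refine fun hst => Finset.card_lt_card <| Finset.ssubset_iff_subset_ne.mpr
      ⟨Finset.monotone_filter_right A fun _ _ hu => hu.trans hst.le, fun heq => ?_⟩
    have ht' : t ∈ A.filter fun u => f u ≤ f s := heq ▸ Finset.mem_filter.mpr ⟨ht, le_rfl⟩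
    exact hst.not_ge (Finset.mem_filter.mp ht').2

lemma bijOn_rankBy {A : Finset ι} {f : ι → α} (hf : Set.InjOn f A) :
    Set.BijOn (rankBy A f) A (Finset.Icc 1 A.card) := by
  have hmaps : Set.MapsTo (rankBy A f) A (Finset.Icc 1 A.card) := fun s hs =>
    Finset.mem_Icc.mpr ⟨Finset.card_pos.mpr ⟨s, Finset.mem_filter.mpr ⟨hs, le_rfl⟩⟩,
      Finset.card_filter_le _ _⟩
  have hinj : Set.InjOn (rankBy A f) A := fun s hs t ht hst => hf hs ht <| le_antisymm
    (not_lt.mp fun h => hst.not_gt ((rankBy_lt_rankBy_iff hs).mpr h))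
    (not_lt.mp fun h => hst.not_lt ((rankBy_lt_rankBy_iff ht).mpr h))
  exact ⟨hmaps, hinj, Finset.surjOn_of_injOn_of_card_le _ hmaps hinj (by simp)⟩

end Rank

lemma add_mul_lt_add_mul_iff_lex {M a b p q : ℕ} (ha : a < M) (hb : b < M) :
    a + M * p < b + M * q ↔ p < q ∨ p = q ∧ a < b := by
  have add_mul_lt_of_lt {a b p q : ℕ} (ha : a < M) (hpq : p < q) : a + M * p < b + M * q :=
    calc a + M * p < M * (p + 1) := by linarith
      _ ≤ M * q := Nat.mul_le_mul_left M hpq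
      _ ≤ b + M * q := Nat.le_add_left _ _
  rcases lt_trichotomy p q with hpq | rfl | hqp
  · simp [hpq, add_mul_lt_of_lt ha hpq]
  · simp
  · simp [hqp.not_gt, hqp.ne', (add_mul_lt_of_lt (b := a) hb hqp).le]

lemma add_mul_eq_add_mul_iff {M a b p q : ℕ} (ha : a < M) (hb : b < M) :
    a + M * p = b + M * q ↔ p = q ∧ a = b := by
  have hlt := add_mul_lt_add_mul_iff_lex (p := p) (q := q) ha hb
  have hgt := add_mul_lt_add_mul_iff_lex (p := q) (q := p) hb ha
  omega

section Shuffle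

variable {n T : ℕ} {m σ σ' σ'' K P Q : ℕ → ℕ}

lemma QShuffle.iff_add_mul {M : ℕ} (hP : ∀ s ∈ Finset.Icc 1 n, P s < M) (h : QShuffle n P σ σ') :
    QShuffle n Q σ' σ'' ↔ QShuffle n (fun s => P s + M * Q s) σ σ'' := by
  refine forall₂_congr fun s hs => forall₂_congr fun t ht => iff_congr Iff.rfl ?_
  rw [h s hs t ht, add_mul_lt_add_mul_iff_lex (hP s hs) (hP t ht),
    add_mul_eq_add_mul_iff (hP s hs) (hP t ht)]
  tauto

lemma QShuffle.div_mod_of_mod {M b : ℕ} (hM : 0 < M) (h : QShuffle n (fun s => K s % M) σ σ')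
    (h' : QShuffle n (fun s => K s % (M * b)) σ σ'') :
    QShuffle n (fun s => K s / M % b) σ' σ'' := by
  rw [h.iff_add_mul fun s _ => Nat.mod_lt _ hM]
  simpa only [Nat.mod_mul] using h'

lemma exists_bijOn_qShuffle (P : ℕ → ℕ) (hσ : Set.InjOn σ (Set.Icc 1 n)) :
    ∃ σ', Set.BijOn σ' (Set.Icc 1 n) (Set.Icc 1 n) ∧ QShuffle n P σ σ' := by
  let key : ℕ → ℕ ×ₗ ℕ := fun s => toLex (P s, σ s)
  have hkey : Set.InjOn key (Finset.Icc 1 n) := fun s hs t ht hst =>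
    hσ (by simpa using hs) (by simpa using ht) (congrArg (fun x => (ofLex x).2) hst)
  exact ⟨rankBy (Finset.Icc 1 n) key, by simpa using bijOn_rankBy hkey, fun s _ t ht =>
    (rankBy_lt_rankBy_iff ht).trans Prod.Lex.toLex_lt_toLex⟩

lemma exists_qShuffle_lt_prod_of_rounds {P σs : ℕ → ℕ → ℕ}
    (hP : ∀ t ∈ Finset.Icc 1 T, ∀ s ∈ Finset.Icc 1 n, P t s < m t)
    (hQ : ∀ t ∈ Finset.Icc 1 T, QShuffle n (P t) (σs (t - 1)) (σs t)) :
    ∃ K : ℕ → ℕ, (∀ s ∈ Finset.Icc 1 n, K s < ∏ t ∈ Finset.Icc 1 T, m t) ∧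
      QShuffle n K (σs 0) (σs T) := by
  induction T with
  | zero => exact ⟨fun _ => 0, by simp, by simp [QShuffle]⟩
  | succ T ih =>
    have hsub : Finset.Icc 1 T ⊆ Finset.Icc 1 (T + 1) := Finset.Icc_subset_Icc_right T.le_succ
    have hlast : T + 1 ∈ Finset.Icc 1 (T + 1) := by simp
    obtain ⟨K, hK, hKQ⟩ := ih (fun t ht => hP t (hsub ht)) (fun t ht => hQ t (hsub ht))
    refine ⟨_, fun s hs => ?_, (hKQ.iff_add_mul hK).mp (hQ (T + 1) hlast)⟩
    rw [Finset.prod_Icc_succ_top (by omega)]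
    calc K s + (∏ t ∈ Finset.Icc 1 T, m t) * P (T + 1) s
        < (∏ t ∈ Finset.Icc 1 T, m t) * (P (T + 1) s + 1) := by linarith [hK s hs]
      _ ≤ (∏ t ∈ Finset.Icc 1 T, m t) * m (T + 1) := Nat.mul_le_mul_left _ (hP _ hlast s hs)

lemma exists_rounds_of_qShuffle_lt_prod (hT : 1 ≤ T) (hσ : Set.InjOn σ (Set.Icc 1 n))
    (hσ' : Set.BijOn σ' (Set.Icc 1 n) (Set.Icc 1 n)) (h : QShuffle n K σ σ')
    (hK : ∀ s ∈ Finset.Icc 1 n, K s < ∏ t ∈ Finset.Icc 1 T, m t) :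
    ∃ P σs : ℕ → ℕ → ℕ, σs 0 = σ ∧ σs T = σ' ∧
      (∀ t ∈ Finset.Icc 1 T, Set.BijOn (σs t) (Set.Icc 1 n) (Set.Icc 1 n)) ∧
      (∀ t ∈ Finset.Icc 1 T, ∀ s ∈ Finset.Icc 1 n, P t s < m t) ∧
      (∀ t ∈ Finset.Icc 1 T, QShuffle n (P t) (σs (t - 1)) (σs t)) := by
  let M : ℕ → ℕ := fun t => ∏ i ∈ Finset.Icc 1 t, m i
  have hm {s} (hs : s ∈ Finset.Icc 1 n) : ∀ t ∈ Finset.Icc 1 T, 0 < m t := fun t ht =>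
    Nat.pos_of_ne_zero (Finset.prod_ne_zero_iff.mp (Nat.ne_zero_of_lt (hK s hs)) t ht)
  -- After `t` rounds the cards are ordered by the `t` lowest digits of `K`, then by `σ`.
  choose τ hτ hτQ using fun t => exists_bijOn_qShuffle (fun s => K s % M t) hσ
  let σs := Function.update (Function.update τ T σ') 0 σ
  have hσs_zero : σs 0 = σ := Function.update_self ..
  have hσs_top : σs T = σ' := by simp [σs, Nat.ne_of_gt hT]
  have hσs_of_ne {t} (h0 : t ≠ 0) (hne : t ≠ T) : σs t = τ t := by simp [σs, h0, hne]
  have hσsQ (t : ℕ) : QShuffle n (fun s => K s % M t) σ (σs t) := by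
    rcases eq_or_ne t 0 with rfl | h0
    · simp [hσs_zero, M, QShuffle, Nat.mod_one]
    rcases eq_or_ne t T with rfl | hne
    · intro s hs u hu
      simpa only [hσs_top, Nat.mod_eq_of_lt (hK s hs), Nat.mod_eq_of_lt (hK u hu), M]
        using h s hs u hu
    · exact hσs_of_ne h0 hne ▸ hτQ t
  refine ⟨fun t s => K s / M (t - 1) % m t, σs, hσs_zero, hσs_top, fun t ht => ?_,
    fun t ht s hs => Nat.mod_lt _ (hm hs t ht), fun t ht => ?_⟩
  · rcases eq_or_ne t T with rfl | hne
    · exact hσs_top ▸ hσ'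
    · exact hσs_of_ne (Nat.ne_of_gt (Finset.mem_Icc.mp ht).1) hne ▸ hτ t
  · obtain ⟨t, rfl⟩ := Nat.exists_eq_add_of_le' (Finset.mem_Icc.mp ht).1
    intro s hs
    have hMt : 0 < M t := Finset.prod_pos fun i hi =>
      hm hs i (Finset.Icc_subset_Icc_right (by grind) hi)
    have hMsucc : M (t + 1) = M t * m (t + 1) := Finset.prod_Icc_succ_top (by omega) m
    exact (hσsQ t).div_mod_of_mod hMt (by simpa only [hMsucc] using hσsQ (t + 1)) s hs

lemma descents_succ {k : ℕ} (hk : 1 ≤ k) (σ : ℕ → ℕ) :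
    descents (k + 1) σ = descents k σ + if σ (k + 1) < σ k then 1 else 0 := by
  obtain ⟨j, rfl⟩ := Nat.exists_eq_add_of_le' hk
  simp only [descents, Finset.card_filter, Nat.add_sub_cancel]
  exact Finset.sum_Icc_succ_top (by omega) _

lemma monotone_descents (σ : ℕ → ℕ) : Monotone fun n => descents n σ := fun _ _ hkn =>
  Finset.card_le_card <| Finset.filter_subset_filter _ <|
    Finset.Icc_subset_Icc_right (Nat.sub_le_sub_right hkn 1)

lemma descents_le_of_qShuffle_strictMonoOn (h : QShuffle n K σ σ')
    (hσ' : StrictMonoOn σ' (Set.Icc 1 n)) {s : ℕ} (hs : s ∈ Finset.Icc 1 n) :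
    descents s σ ≤ K s := by
  obtain ⟨hs1, hsn⟩ := Finset.mem_Icc.mp hs
  induction s, hs1 using Nat.le_induction with
  | base => simp [descents]
  | succ s hs1 ih =>
    have hs' : s ∈ Finset.Icc 1 n := Finset.mem_Icc.mpr ⟨hs1, by omega⟩
    have hstep := (h s hs' (s + 1) hs).mp <|
      hσ' (Finset.mem_Icc.mp hs') (Finset.mem_Icc.mp hs) s.lt_succ_self
    have := ih hs' (by omega)
    rw [descents_succ hs1]
    split_ifs <;> omega

lemma qShuffle_descents_id (hσ : Set.InjOn σ (Set.Icc 1 n)) :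
    QShuffle n (fun s => descents s σ) σ id := by
  let key : ℕ → ℕ ×ₗ ℕ := fun s => toLex (descents s σ, σ s)
  have hkey : StrictMonoOn key (Set.Icc 1 n) := by
    refine strictMonoOn_of_lt_add_one Set.ordConnected_Icc fun s _ hs hs' => ?_
    have hne : σ s ≠ σ (s + 1) := hσ.ne hs hs' s.succ_ne_self.symm
    rw [Prod.Lex.toLex_lt_toLex, descents_succ hs.1]
    grind
  exact fun s hs t ht =>
    (hkey.lt_iff_lt (Finset.mem_Icc.mp hs) (Finset.mem_Icc.mp ht)).symm.trans
      Prod.Lex.toLex_lt_toLex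

end Shuffle

theorem stmt_15_general (n T : ℕ) (hn : 1 ≤ n) (hT : 1 ≤ T) (m : ℕ → ℕ)
    (σ : ℕ → ℕ) (hσ : Set.InjOn σ (Set.Icc 1 n)) :
    (∃ (P : ℕ → ℕ → ℕ) (σs : ℕ → ℕ → ℕ),
      σs 0 = σ ∧
      (∀ t ∈ Finset.Icc 1 T,
        Set.BijOn (σs t) (Set.Icc 1 n) (Set.Icc 1 n)) ∧
      (∀ t ∈ Finset.Icc 1 T, ∀ s ∈ Finset.Icc 1 n, P t s < m t) ∧
      (∀ t ∈ Finset.Icc 1 T, QShuffle n (P t) (σs (t - 1)) (σs t)) ∧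
      (∀ s ∈ Finset.Icc 1 n, σs T s = s)) ↔
    ascRuns n σ ≤ ∏ t ∈ Finset.Icc 1 T, m t := by
  rw [ascRuns, Nat.one_add_le_iff]
  constructor
  · rintro ⟨P, σs, rfl, -, hP, hQ, hid⟩
    obtain ⟨K, hK, hKQ⟩ := exists_qShuffle_lt_prod_of_rounds hP hQ
    have hmono : StrictMonoOn (σs T) (Set.Icc 1 n) :=
      (strictMono_id.strictMonoOn _).congr fun s hs => (hid s (Finset.mem_Icc.mpr hs)).symm
    have hn' : n ∈ Finset.Icc 1 n := Finset.right_mem_Icc.mpr hn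
    exact (descents_le_of_qShuffle_strictMonoOn hKQ hmono hn').trans_lt (hK n hn')
  · intro hdesc
    obtain ⟨P, σs, h0, hid, hbij, hP, hQ⟩ := exists_rounds_of_qShuffle_lt_prod hT hσ
      (Set.bijOn_id _) (qShuffle_descents_id hσ)
      fun s hs => (monotone_descents σ (Finset.mem_Icc.mp hs).2).trans_lt hdesc
    exact ⟨P, σs, h0, hbij, hP, hQ, fun s _ => congrFun hid s⟩

theorem stmt_15 (n T : ℕ) (hn : 1 ≤ n) (hT : 1 ≤ T)
    (m : ℕ → ℕ) (hm : ∀ t ∈ Finset.Icc 1 T, 1 ≤ m t)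
    (σ : ℕ → ℕ) (hσ : Set.BijOn σ (Set.Icc 1 n) (Set.Icc 1 n)) :
    (∃ (P : ℕ → ℕ → ℕ) (σs : ℕ → ℕ → ℕ),
      σs 0 = σ ∧
      (∀ t ∈ Finset.Icc 1 T,
        Set.BijOn (σs t) (Set.Icc 1 n) (Set.Icc 1 n)) ∧
      (∀ t ∈ Finset.Icc 1 T, ∀ s ∈ Finset.Icc 1 n, P t s < m t) ∧
      (∀ t ∈ Finset.Icc 1 T, QShuffle n (P t) (σs (t - 1)) (σs t)) ∧
      (∀ s ∈ Finset.Icc 1 n, σs T s = s)) ↔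
    ascRuns n σ ≤ ∏ t ∈ Finset.Icc 1 T, m t := by
  exact stmt_15_general n T hn hT m σ hσ.injOn
end
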